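/- The 6-element set {0,1} × {0,1,2} ⊆ ℕ^2 is not coverable; that is, for every partition of {0,1} × {0,1,2} into sets S_1 and S_2, either S_1 contains two distinct points with the same second coordinate or S_2 contains two distinct points with the same first coordinate. Consequently h(ℕ^2) = 5. -/

import Mathlib

/-- A winning guessing strategy in the hat guessing game on `G` with `q` colors:
each vertex `v` gets a guessing function from colorings of its open neighborhood
to colors, such that for every coloring some vertex guesses its own color. -/
def HatWinning {V : Type*} (G : SimpleGraph V) (q : ℕ) : Prop :=
  ∃ g : (v : V) → ({w : V // G.Adj v w} → Fin q) → Fin q,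
    ∀ χ : V → Fin q, ∃ v : V, g v (fun w => χ w.1) = χ v

/-- The hat guessing number of `G`: the largest number of colors for which the
players have a winning strategy. -/
noncomputable def hatGuessingNumber {V : Type*} (G : SimpleGraph V) : ℕ :=
  sSup {q : ℕ | HatWinning G q}

/-- Sylvester's sequence: `s 0 = 2`, `s (n+1) = s n ^ 2 - s n + 1`. -/
def sylvester : ℕ → ℕ
  | 0 => 2
  | n + 1 => sylvester n ^ 2 - sylvester n + 1

/-- The graph `G_d(N)`: vertices are the vertices of the complete rooted `N`-ary
tree of depth `d` (encoded as lists of child-indices of length at most `d`), and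
each vertex is adjacent to all of its ancestors (its proper prefixes). -/
def ancTree (d N : ℕ) : SimpleGraph {l : List (Fin N) // l.length ≤ d} where
  Adj v w := v ≠ w ∧ (v.1 <+: w.1 ∨ w.1 <+: v.1)
  symm := by
    constructor
    intro v w h
    exact ⟨h.1.symm, h.2.symm⟩
  loopless := by
    constructor
    intro v h
    exact h.1 rfl

/-- The book graph `B_{d,n}`: a spine of `d` vertices forming a clique, completely
joined to `n` pages forming an independent set. -/
def bookGraph (d n : ℕ) : SimpleGraph (Fin d ⊕ Fin n) where
  Adj x y := x ≠ y ∧ (x.isLeft ∨ y.isLeft)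
  symm := by
    constructor
    intro x y h
    exact ⟨h.1.symm, h.2.symm⟩
  loopless := by
    constructor
    intro x h
    exact h.1 rfl

/-- A set `S ⊆ ℕ^d` is coverable if it can be partitioned into parts `S_1, …, S_d`
such that `S_i` contains at most one point on every line parallel to the `i`-th
coordinate axis, i.e. two distinct points in part `i` differ in some coordinate
other than the `i`-th. -/
def Coverable {d : ℕ} (S : Set (Fin d → ℕ)) : Prop :=
  ∃ f : (Fin d → ℕ) → Fin d, ∀ x ∈ S, ∀ y ∈ S,
    x ≠ y → f x = f y → ∃ j : Fin d, j ≠ f x ∧ x j ≠ y j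

/-- `hcov d` is `h(ℕ^d)`: the largest `t` such that every `t`-element subset of
`ℕ^d` is coverable. -/
noncomputable def hcov (d : ℕ) : ℕ :=
  sSup {t : ℕ | ∀ S : Set (Fin d → ℕ), S.Finite → S.ncard = t → Coverable S}

/-- `p` is a left-to-right path with `k` edges in a graph on `Fin n` with the
natural vertex ordering: a strictly increasing sequence of `k+1` vertices in which
consecutive vertices are adjacent. -/
def IsLTRPath {n : ℕ} (G : SimpleGraph (Fin n)) (k : ℕ) (p : Fin (k + 1) → Fin n) : Prop :=
  StrictMono p ∧ ∀ i : Fin k, G.Adj (p i.castSucc) (p i.succ)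

/-- The depth of a vertex `v`: the largest number of edges in a left-to-right path
ending at `v`. -/
noncomputable def ltrDepth {n : ℕ} (G : SimpleGraph (Fin n)) (v : Fin n) : ℕ :=
  sSup {k : ℕ | ∃ p : Fin (k + 1) → Fin n, IsLTRPath G k p ∧ p (Fin.last k) = v}

/-!
Choosing a part for every point of `S` amounts to choosing one of the `d` axis-parallel lines
through it, and the partition is admissible exactly when distinct points choose distinct lines. By
Hall's theorem `S` is therefore coverable, for `d ≥ 1`, iff every finite `A ⊆ S` meets at least `#A`
such lines.

The grid `{0,1} × {0,1,2}` has six points on five lines. Conversely, a planar set meeting `a` lines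
of one direction and `b` of the other has at most `a * b` points, and `a + b < n ≤ a * b` forces
`4 * n ≤ 4 * (a * b) ≤ (a + b) ^ 2 ≤ (n - 1) ^ 2`, hence `6 ≤ n`.
-/

open Finset

variable {d : ℕ}

/-- The line through `x` parallel to the `i`-th axis, encoded by its direction `i` and the
coordinates of `x` other than the `i`-th. -/
def axisLine (i : Fin d) (x : Fin d → ℕ) : Σ i : Fin d, ({j // j ≠ i} → ℕ) :=
  ⟨i, fun j => x j⟩

theorem axisLine_eq_axisLine_iff {i j : Fin d} {x y : Fin d → ℕ} :
    axisLine i x = axisLine j y ↔ i = j ∧ ∀ k ≠ i, x k = y k := by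
  constructor
  · intro h
    obtain rfl : i = j := congrArg Sigma.fst h
    exact ⟨rfl, fun k hk => congrFun (eq_of_heq (Sigma.mk.inj h).2) ⟨k, hk⟩⟩
  · rintro ⟨rfl, h⟩
    exact congrArg (Sigma.mk i) (funext fun k => h k k.2)

theorem coverable_iff_exists_injOn_axisLine {S : Set (Fin d → ℕ)} :
    Coverable S ↔ ∃ f : (Fin d → ℕ) → Fin d, S.InjOn fun x => axisLine (f x) x := by
  refine exists_congr fun f => forall₄_congr fun x _ y _ => ?_
  simp only [axisLine_eq_axisLine_iff]
  grind

theorem Coverable.mono {S T : Set (Fin d → ℕ)} (hST : S ⊆ T) (hT : Coverable T) :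
    Coverable S := by
  rw [coverable_iff_exists_injOn_axisLine] at hT ⊢
  exact hT.imp fun _ hf => hf.mono hST

theorem Coverable.card_le_sum_card_image_axisLine {A : Finset (Fin d → ℕ)}
    (hA : Coverable (A : Set (Fin d → ℕ))) : #A ≤ ∑ i, #(A.image (axisLine i)) := by
  obtain ⟨f, hf⟩ := coverable_iff_exists_injOn_axisLine.1 hA
  calc #A ≤ #(univ.biUnion fun i => A.image (axisLine i)) :=
        card_le_card_of_injOn _ (fun x hx =>
          mem_biUnion.2 ⟨f x, mem_univ _, mem_image_of_mem _ hx⟩) hf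
    _ ≤ ∑ i, #(A.image (axisLine i)) := card_biUnion_le

theorem sum_card_image_axisLine_eq_card_biUnion (A : Finset (Fin d → ℕ)) :
    ∑ i, #(A.image (axisLine i)) = #(A.biUnion fun x => univ.image fun i => axisLine i x) := by
  have hdisj : Set.PairwiseDisjoint (univ : Finset (Fin d)) fun i => A.image (axisLine i) := by
    intro i _ j _ hij
    simp only [Function.onFun, disjoint_left, mem_image]
    rintro _ ⟨x, _, rfl⟩ ⟨y, _, hyx⟩
    exact hij (axisLine_eq_axisLine_iff.1 hyx).1.symm
  rw [← card_biUnion hdisj]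
  congr 1
  ext l
  simp only [mem_biUnion, mem_image, mem_univ, true_and]
  exact exists_comm.trans (by simp only [exists_and_left])

theorem coverable_of_forall_card_le_sum_card_image_axisLine [NeZero d] {S : Set (Fin d → ℕ)}
    (hS : ∀ A : Finset (Fin d → ℕ), ↑A ⊆ S → #A ≤ ∑ i, #(A.image (axisLine i))) :
    Coverable S := by
  classical
  let lines (x : S) : Finset (Σ i : Fin d, ({j // j ≠ i} → ℕ)) := univ.image fun i => axisLine i x
  have hall (A : Finset S) : #A ≤ #(A.biUnion lines) := by
    have hle := hS (A.map (Function.Embedding.subtype _)) (by simp)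
    rwa [card_map, sum_card_image_axisLine_eq_card_biUnion, map_eq_image, image_biUnion] at hle
  obtain ⟨line, hinj, hmem⟩ := (all_card_le_biUnion_card_iff_exists_injective lines).1 hall
  have hline (x : S) : axisLine (line x).1 x = line x := by
    obtain ⟨i, -, hi⟩ := mem_image.1 (hmem x)
    rw [← hi]
    rfl
  refine coverable_iff_exists_injOn_axisLine.2
    ⟨fun x => if hx : x ∈ S then (line ⟨x, hx⟩).1 else 0, fun x hx y hy hxy => ?_⟩
  simp only [hx, hy, dite_true] at hxy
  rw [hline ⟨x, hx⟩, hline ⟨y, hy⟩] at hxy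
  exact congrArg Subtype.val (hinj hxy)

theorem card_image_axisLine_piFinset_le (s : Fin d → Finset ℕ) (i : Fin d) :
    #((Fintype.piFinset s).image (axisLine i)) ≤ ∏ j ∈ univ.erase i, #(s j) := by
  calc #((Fintype.piFinset s).image (axisLine i))
      ≤ #((Fintype.piFinset fun j : {j // j ≠ i} => s j).image (Sigma.mk i)) :=
        card_le_card <| image_subset_iff.2 fun x hx =>
          mem_image_of_mem (Sigma.mk i) <| Fintype.mem_piFinset.2 fun j : {j // j ≠ i} =>
            Fintype.mem_piFinset.1 hx j
    _ ≤ #(Fintype.piFinset fun j : {j // j ≠ i} => s j) := card_image_le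
    _ = ∏ j ∈ univ.erase i, #(s j) := by
        rw [Fintype.card_piFinset, ← prod_subtype (univ.erase i) (by simp) fun j => #(s j)]

theorem Coverable.prod_card_le_sum_prod_card_erase {s : Fin d → Finset ℕ}
    (hs : Coverable (Fintype.piFinset s : Set (Fin d → ℕ))) :
    ∏ i, #(s i) ≤ ∑ i, ∏ j ∈ univ.erase i, #(s j) := by
  rw [← Fintype.card_piFinset]
  exact hs.card_le_sum_card_image_axisLine.trans
    (sum_le_sum fun i _ => card_image_axisLine_piFinset_le s i)

theorem card_le_card_image_axisLine_mul (A : Finset (Fin 2 → ℕ)) :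
    #A ≤ #(A.image (axisLine 0)) * #(A.image (axisLine 1)) := by
  rw [← card_product]
  refine card_le_card_of_injOn (fun x => (axisLine 0 x, axisLine 1 x))
    (fun x hx => mk_mem_product (mem_image_of_mem _ hx) (mem_image_of_mem _ hx))
    fun x _ y _ hxy => ?_
  obtain ⟨h0, h1⟩ := Prod.mk.inj hxy
  funext i
  fin_cases i
  · exact (axisLine_eq_axisLine_iff.1 h1).2 0 (by decide)
  · exact (axisLine_eq_axisLine_iff.1 h0).2 1 (by decide)

theorem le_add_of_le_mul_of_le_five {n a b : ℕ} (hmul : n ≤ a * b) (hn : n ≤ 5) : n ≤ a + b := by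
  by_contra! hlt
  nlinarith [four_mul_le_sq_add a b]

theorem coverable_of_card_le_five {A : Finset (Fin 2 → ℕ)} (hA : #A ≤ 5) :
    Coverable (A : Set (Fin 2 → ℕ)) :=
  coverable_of_forall_card_le_sum_card_image_axisLine fun B hBA => by
    rw [Fin.sum_univ_two]
    exact le_add_of_le_mul_of_le_five (card_le_card_image_axisLine_mul B)
      ((card_le_card (coe_subset.1 hBA)).trans hA)

theorem hcov_eq_of_not_coverable [NeZero d] {n : ℕ}
    (hn : ∀ A : Finset (Fin d → ℕ), #A = n → Coverable (A : Set (Fin d → ℕ)))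
    {B : Finset (Fin d → ℕ)} (hB : ¬ Coverable (B : Set (Fin d → ℕ))) (hcard : #B = n + 1) :
    hcov d = n := by
  refine IsGreatest.csSup_eq ⟨fun S hfin hS => ?_, fun t ht => ?_⟩
  · lift S to Finset (Fin d → ℕ) using hfin
    exact hn S (by rwa [Set.ncard_coe_finset] at hS)
  · by_contra! hlt
    obtain ⟨T, hBT, hT⟩ := Infinite.exists_superset_card_eq B t (by lia)
    exact hB ((ht T T.finite_toSet (by rw [Set.ncard_coe_finset, hT])).mono (coe_subset.2 hBT))

/-- The `6`-element set `{0,1} × {0,1,2} ⊆ ℕ^2` is not coverable; consequently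
`h(ℕ^2) = 5`. -/
theorem not_coverable_two_by_three :
    ¬ Coverable {x : Fin 2 → ℕ | x 0 ≤ 1 ∧ x 1 ≤ 2} ∧ hcov 2 = 5 := by
  let grid : Finset (Fin 2 → ℕ) := Fintype.piFinset ![range 2, range 3]
  have hgrid : {x : Fin 2 → ℕ | x 0 ≤ 1 ∧ x 1 ≤ 2} = grid := by
    ext x
    simp [grid, Fin.forall_fin_two, Nat.lt_succ_iff]
  have hnot : ¬ Coverable (grid : Set (Fin 2 → ℕ)) := fun h =>
    absurd h.prod_card_le_sum_prod_card_erase (by decide)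
  exact ⟨hgrid ▸ hnot, hcov_eq_of_not_coverable (fun _ hA => coverable_of_card_le_five hA.le)
    hnot (by simp [grid])⟩
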